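/- Under the hypotheses of one iteration of projective splitting at p = (z, w₁,…,w_{n−1}) with wₙ = −(w₁+⋯+w_{n−1}), suppose the gradient g of the separator function φ is nonzero and let p⁺ = p − β (φ(p)/‖g‖_γ²) g with β ∈ [β̲, β̄], 0 < β̲ ≤ β̄ < 2. Then Σ_{i=1}^{n} ‖w_i − y_i‖² ≤ E₁ ‖p⁺ − p‖_γ², where E₁ = 2(1−σ)⁻¹ ρ̲⁻¹ (1 + ξ₂⁻¹ L̄ (1 + ρ̲ L̄)) · ξ₁/(β̲² ξ₂), with ξ₁ = 2n[1 + 2γ⁻¹(L̄²|F| + ρ̲⁻²(1+δ))] and ξ₂ = min{(1−σ)ρ̄⁻¹, min_{j∈F}(ρ̄_j⁻¹ − L_j)}. -/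

import Mathlib

open scoped RealInnerProductSpace

/-!
A step of either kind makes `⟪z - xᵢ, yᵢ - wᵢ⟫` dominate a multiple of `‖z - xᵢ‖²` and, after adding
`O(‖z - xᵢ‖²)` for forward steps, a multiple of `‖yᵢ - wᵢ‖²`. Summing over `i`, the separator value
`φ(p)` controls both `∑ ‖z - xᵢ‖²` and `∑ ‖yᵢ - wᵢ‖²`. Since `‖g‖_γ²` is at most a multiple of
`∑ ‖z - xᵢ‖²`, this gives `ξ₂ ‖g‖_γ² ≤ ξ₁ φ(p)`, so the projection step, whose squared length is
`β² φ(p)² / ‖g‖_γ²`, controls `φ(p)` and with it the residuals.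
-/

section SumsOfSquares

variable {E ι : Type*} [SeminormedAddCommGroup E]

theorem norm_add_sq_le_two_mul (u v : E) : ‖u + v‖ ^ 2 ≤ 2 * (‖u‖ ^ 2 + ‖v‖ ^ 2) :=
  (pow_le_pow_left₀ (norm_nonneg _) (norm_add_le u v) 2).trans add_sq_le

theorem norm_sum_sq_le_card_mul (s : Finset ι) (v : ι → E) :
    ‖∑ i ∈ s, v i‖ ^ 2 ≤ s.card * ∑ i ∈ s, ‖v i‖ ^ 2 :=
  (pow_le_pow_left₀ (norm_nonneg _) (norm_sum_le s v) 2).trans sq_sum_le_card_mul_sum_sq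

theorem norm_sub_sq_le_two_mul_sum [Fintype ι] (z : E) (x : ι → E) {i j : ι} (hij : i ≠ j) :
    ‖x i - x j‖ ^ 2 ≤ 2 * ∑ k, ‖z - x k‖ ^ 2 :=
  calc ‖x i - x j‖ ^ 2 = ‖(z - x j) + -(z - x i)‖ ^ 2 := by congr 2; abel
    _ ≤ 2 * (‖z - x j‖ ^ 2 + ‖z - x i‖ ^ 2) := by
      simpa only [norm_neg] using norm_add_sq_le_two_mul (z - x j) (-(z - x i))
    _ ≤ 2 * ∑ k, ‖z - x k‖ ^ 2 := by
      gcongr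
      exact Finset.add_le_sum (f := fun k ↦ ‖z - x k‖ ^ 2) (fun _ _ ↦ sq_nonneg _)
        (Finset.mem_univ j) (Finset.mem_univ i) hij.symm

theorem norm_smul_sq [NormedSpace ℝ E] (r : ℝ) (v : E) : ‖r • v‖ ^ 2 = r ^ 2 * ‖v‖ ^ 2 := by
  rw [norm_smul, mul_pow, Real.norm_eq_abs, sq_abs]

end SumsOfSquares

section Steps

variable {H : Type*} [SeminormedAddCommGroup H] [InnerProductSpace ℝ H]

/-- The equation of the inexact backward step of projective splitting at `(z, w)`, with stepsize `ρ`
and error `e`, together with its error conditions. -/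
structure IsInexactBackwardStep (z w x y e : H) (ρ σ δ : ℝ) : Prop where
  add_smul_eq : x + ρ • y = z + ρ • w + e
  neg_le_inner : -(σ * ‖z - x‖ ^ 2) ≤ ⟪z - x, e⟫
  inner_le : ⟪e, y - w⟫ ≤ ρ * σ * ‖y - w‖ ^ 2
  norm_error_sq_le : ‖e‖ ^ 2 ≤ δ * ‖z - x‖ ^ 2

/-- The two forward steps of projective splitting at `(z, w)` with stepsize `ρ`. -/
structure IsTwoForwardStep (A : H → H) (z w x y : H) (ρ : ℝ) : Prop where
  primal_eq : x = z - ρ • (A z - w)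
  dual_eq : y = A x

/-- The lower bounds on the separator term `⟪z - x, y - w⟫`, and the comparison of the dual residual
`y - w` with the primal residual `z - x`, that either kind of step provides. -/
structure IsSeparatingPair (z w x y : H) (ξ η M K : ℝ) : Prop where
  primal_le : ξ * ‖z - x‖ ^ 2 ≤ ⟪z - x, y - w⟫
  dual_le : η * ‖y - w‖ ^ 2 ≤ ⟪z - x, y - w⟫ + M * ‖z - x‖ ^ 2
  dual_le_primal : ‖y - w‖ ^ 2 ≤ K * ‖z - x‖ ^ 2

namespace IsInexactBackwardStep

variable {z w x y e : H} {ρ σ δ : ℝ}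

theorem smul_residual_eq (h : IsInexactBackwardStep z w x y e ρ σ δ) :
    ρ • (y - w) = (z - x) + e := by
  linear_combination (norm := module) h.add_smul_eq

theorem primal_residual_le (h : IsInexactBackwardStep z w x y e ρ σ δ) (hρ : 0 < ρ) :
    (1 - σ) / ρ * ‖z - x‖ ^ 2 ≤ ⟪z - x, y - w⟫ := by
  have inner_eq : ρ * ⟪z - x, y - w⟫ = ‖z - x‖ ^ 2 + ⟪z - x, e⟫ := by
    rw [← real_inner_smul_right, h.smul_residual_eq, inner_add_right, real_inner_self_eq_norm_sq]
  rw [div_mul_eq_mul_div, div_le_iff₀ hρ]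
  linarith [h.neg_le_inner]

theorem dual_residual_le (h : IsInexactBackwardStep z w x y e ρ σ δ) :
    ρ * (1 - σ) * ‖y - w‖ ^ 2 ≤ ⟪z - x, y - w⟫ := by
  have inner_eq : ⟪z - x, y - w⟫ = ρ * ‖y - w‖ ^ 2 - ⟪e, y - w⟫ := by
    rw [eq_sub_of_add_eq h.smul_residual_eq.symm, inner_sub_left, real_inner_smul_left,
      real_inner_self_eq_norm_sq]
  linarith [h.inner_le]

theorem dual_residual_le_primal (h : IsInexactBackwardStep z w x y e ρ σ δ) (hρ : 0 < ρ) :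
    ‖y - w‖ ^ 2 ≤ 2 * ((1 + δ) / ρ ^ 2) * ‖z - x‖ ^ 2 := by
  have smul_sq_le : ρ ^ 2 * ‖y - w‖ ^ 2 ≤ 2 * (‖z - x‖ ^ 2 + ‖e‖ ^ 2) := by
    rw [← norm_smul_sq, h.smul_residual_eq]
    exact norm_add_sq_le_two_mul _ _
  rw [← mul_div_assoc, div_mul_eq_mul_div, le_div_iff₀ (by positivity)]
  linarith [h.norm_error_sq_le]

theorem isSeparatingPair (h : IsInexactBackwardStep z w x y e ρ σ δ) {ρlo ξ M K : ℝ}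
    (hσ : σ ≤ 1) (hδ : 0 ≤ δ) (hρlo : 0 < ρlo) (hρ : ρlo ≤ ρ) (hξ : ξ ≤ (1 - σ) / ρ)
    (hM : 0 ≤ M) (hK : 2 * ((1 + δ) / ρlo ^ 2) ≤ K) :
    IsSeparatingPair z w x y ξ (ρlo * (1 - σ) / 2) M K where
  primal_le := (by gcongr : _ ≤ _).trans (h.primal_residual_le (hρlo.trans_le hρ))
  dual_le := by
    have : 0 ≤ 1 - σ := sub_nonneg.2 hσ
    calc ρlo * (1 - σ) / 2 * ‖y - w‖ ^ 2 ≤ ρlo * (1 - σ) * ‖y - w‖ ^ 2 := by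
          gcongr; exact half_le_self (by positivity)
      _ ≤ ρ * (1 - σ) * ‖y - w‖ ^ 2 := by gcongr
      _ ≤ ⟪z - x, y - w⟫ := h.dual_residual_le
      _ ≤ ⟪z - x, y - w⟫ + M * ‖z - x‖ ^ 2 := le_add_of_nonneg_right (by positivity)
  dual_le_primal := (h.dual_residual_le_primal (hρlo.trans_le hρ)).trans <| by
    gcongr
    exact le_trans (by gcongr) hK

end IsInexactBackwardStep

namespace IsTwoForwardStep

variable {A : H → H} {z w x y : H} {ρ L : ℝ}

theorem norm_primal_residual_sq (h : IsTwoForwardStep A z w x y ρ) :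
    ‖z - x‖ ^ 2 = ρ ^ 2 * ‖A z - w‖ ^ 2 := by
  rw [h.primal_eq, sub_sub_cancel, norm_smul_sq]

theorem norm_dual_residual_sq_le (h : IsTwoForwardStep A z w x y ρ)
    (hA : ‖A z - A x‖ ≤ L * ‖z - x‖) :
    ‖y - w‖ ^ 2 ≤ 2 * (‖A z - w‖ ^ 2 + L ^ 2 * ‖z - x‖ ^ 2) :=
  calc ‖y - w‖ ^ 2 = ‖(A z - w) + -(A z - A x)‖ ^ 2 := by rw [h.dual_eq]; congr 2; abel
    _ ≤ 2 * (‖A z - w‖ ^ 2 + ‖A z - A x‖ ^ 2) := by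
      simpa only [norm_neg] using norm_add_sq_le_two_mul (A z - w) (-(A z - A x))
    _ ≤ 2 * (‖A z - w‖ ^ 2 + L ^ 2 * ‖z - x‖ ^ 2) := by
      rw [← mul_pow]; gcongr

theorem sub_le_inner (h : IsTwoForwardStep A z w x y ρ)
    (hA : ‖A z - A x‖ ≤ L * ‖z - x‖) :
    ρ * ‖A z - w‖ ^ 2 - L * ‖z - x‖ ^ 2 ≤ ⟪z - x, y - w⟫ := by
  have inner_eq : ⟪z - x, y - w⟫ = ρ * ‖A z - w‖ ^ 2 - ⟪z - x, A z - A x⟫ := by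
    have hzx : z - x = ρ • (A z - w) := by rw [h.primal_eq, sub_sub_cancel]
    rw [h.dual_eq, ← sub_sub_sub_cancel_left w (A x) (A z), inner_sub_right]
    congr 1
    rw [hzx, real_inner_smul_left, real_inner_self_eq_norm_sq]
  have lipschitz_term : ⟪z - x, A z - A x⟫ ≤ L * ‖z - x‖ ^ 2 :=
    calc ⟪z - x, A z - A x⟫ ≤ ‖z - x‖ * ‖A z - A x‖ := real_inner_le_norm _ _
      _ ≤ ‖z - x‖ * (L * ‖z - x‖) := by gcongr
      _ = L * ‖z - x‖ ^ 2 := by ring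
  linarith

theorem primal_residual_le (h : IsTwoForwardStep A z w x y ρ) (hρ : ρ ≠ 0)
    (hA : ‖A z - A x‖ ≤ L * ‖z - x‖) :
    (1 / ρ - L) * ‖z - x‖ ^ 2 ≤ ⟪z - x, y - w⟫ :=
  calc (1 / ρ - L) * ‖z - x‖ ^ 2 = ρ * ‖A z - w‖ ^ 2 - L * ‖z - x‖ ^ 2 := by
        rw [sub_mul, h.norm_primal_residual_sq]; field_simp
    _ ≤ ⟪z - x, y - w⟫ := h.sub_le_inner hA

theorem dual_residual_le (h : IsTwoForwardStep A z w x y ρ) {ρlo : ℝ} (hρlo : 0 ≤ ρlo)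
    (hρ : ρlo ≤ ρ) (hA : ‖A z - A x‖ ≤ L * ‖z - x‖) :
    ρlo / 2 * ‖y - w‖ ^ 2 ≤ ⟪z - x, y - w⟫ + L * (1 + ρlo * L) * ‖z - x‖ ^ 2 :=
  calc ρlo / 2 * ‖y - w‖ ^ 2
      ≤ ρlo / 2 * (2 * (‖A z - w‖ ^ 2 + L ^ 2 * ‖z - x‖ ^ 2)) := by
        gcongr; exact h.norm_dual_residual_sq_le hA
    _ = ρlo * ‖A z - w‖ ^ 2 + ρlo * L ^ 2 * ‖z - x‖ ^ 2 := by ring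
    _ ≤ ρ * ‖A z - w‖ ^ 2 + ρlo * L ^ 2 * ‖z - x‖ ^ 2 := by gcongr
    _ ≤ ⟪z - x, y - w⟫ + L * (1 + ρlo * L) * ‖z - x‖ ^ 2 := by linarith [h.sub_le_inner hA]

theorem dual_residual_le_primal (h : IsTwoForwardStep A z w x y ρ) (hρ : ρ ≠ 0)
    (hA : ‖A z - A x‖ ≤ L * ‖z - x‖) :
    ‖y - w‖ ^ 2 ≤ 2 * (L ^ 2 + 1 / ρ ^ 2) * ‖z - x‖ ^ 2 :=
  calc ‖y - w‖ ^ 2 ≤ 2 * (‖A z - w‖ ^ 2 + L ^ 2 * ‖z - x‖ ^ 2) := h.norm_dual_residual_sq_le hA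
    _ = 2 * (L ^ 2 + 1 / ρ ^ 2) * ‖z - x‖ ^ 2 := by
      rw [h.norm_primal_residual_sq]; field_simp; ring

theorem isSeparatingPair (h : IsTwoForwardStep A z w x y ρ) {ρlo σ ξ M K : ℝ}
    (hA : ‖A z - A x‖ ≤ L * ‖z - x‖) (hσ : 0 ≤ σ) (hρlo : 0 < ρlo) (hρ : ρlo ≤ ρ)
    (hξ : ξ ≤ 1 / ρ - L) (hM : L * (1 + ρlo * L) ≤ M) (hK : 2 * (L ^ 2 + 1 / ρlo ^ 2) ≤ K) :
    IsSeparatingPair z w x y ξ (ρlo * (1 - σ) / 2) M K where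
  primal_le := (by gcongr : _ ≤ _).trans (h.primal_residual_le (hρlo.trans_le hρ).ne' hA)
  dual_le :=
    calc ρlo * (1 - σ) / 2 * ‖y - w‖ ^ 2 ≤ ρlo / 2 * ‖y - w‖ ^ 2 := by
          gcongr; exact mul_le_of_le_one_right hρlo.le (sub_le_self 1 hσ)
      _ ≤ ⟪z - x, y - w⟫ + L * (1 + ρlo * L) * ‖z - x‖ ^ 2 := h.dual_residual_le hρlo.le hρ hA
      _ ≤ ⟪z - x, y - w⟫ + M * ‖z - x‖ ^ 2 := by gcongr
  dual_le_primal := (h.dual_residual_le_primal (hρlo.trans_le hρ).ne' hA).trans <| by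
    gcongr
    exact le_trans (by gcongr) hK

end IsTwoForwardStep

end Steps

section Constants

variable {ι : Type*} [Fintype ι] [Nonempty ι] [DecidableEq ι]

/-- The constant `L̄`: the largest Lipschitz constant over `F`, and `0` if `F` is empty (for
nonnegative constants). -/
def maxLipschitz (F : Finset ι) (L : ι → ℝ) : ℝ :=
  Finset.univ.sup' Finset.univ_nonempty fun i ↦ if i ∈ F then L i else 0

theorem le_maxLipschitz {F : Finset ι} (L : ι → ℝ) {i : ι} (hi : i ∈ F) : L i ≤ maxLipschitz F L :=
  Finset.le_sup'_of_le _ (Finset.mem_univ i) (if_pos hi).ge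

theorem maxLipschitz_nonneg {F : Finset ι} {L : ι → ℝ} (hL : ∀ i ∈ F, 0 ≤ L i) :
    0 ≤ maxLipschitz F L := by
  obtain ⟨i⟩ := ‹Nonempty ι›
  refine Finset.le_sup'_of_le _ (Finset.mem_univ i) ?_
  split_ifs with hi
  exacts [hL i hi, le_rfl]

/-- The constant `ξ₂`, with `B` the indices of backward steps and all other indices those of forward
steps. -/
noncomputable def separationModulus (B : Finset ι) (σ ρhi : ℝ) (ρbar L : ι → ℝ) : ℝ :=
  Finset.univ.inf' Finset.univ_nonempty fun i ↦
    if i ∈ B then (1 - σ) / ρhi else 1 / ρbar i - L i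

theorem separationModulus_le_of_mem {B : Finset ι} {i : ι} (hi : i ∈ B) (σ ρhi : ℝ)
    (ρbar L : ι → ℝ) : separationModulus B σ ρhi ρbar L ≤ (1 - σ) / ρhi :=
  Finset.inf'_le_of_le _ (Finset.mem_univ i) (if_pos hi).le

theorem separationModulus_le_of_notMem {B : Finset ι} {i : ι} (hi : i ∉ B) (σ ρhi : ℝ)
    (ρbar L : ι → ℝ) : separationModulus B σ ρhi ρbar L ≤ 1 / ρbar i - L i :=
  Finset.inf'_le_of_le _ (Finset.mem_univ i) (if_neg hi).le

theorem separationModulus_pos {B F : Finset ι} {σ ρhi : ℝ} {ρbar L : ι → ℝ} (hBF : IsCompl B F)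
    (hσ : σ < 1) (hB : B.Nonempty → 0 < ρhi) (hF : ∀ i ∈ F, 0 < ρbar i ∧ ρbar i * L i < 1) :
    0 < separationModulus B σ ρhi ρbar L := by
  obtain rfl := hBF.compl_eq
  refine (Finset.lt_inf'_iff _).2 fun i _ ↦ ?_
  split_ifs with hi
  · exact div_pos (sub_pos.2 hσ) (hB ⟨i, hi⟩)
  · obtain ⟨hρbar, hρbarL⟩ := hF i (Finset.mem_compl.2 hi)
    rwa [sub_pos, lt_div_iff₀' hρbar]

end Constants

section Separator

variable {H : Type*} [SeminormedAddCommGroup H] {m : ℕ}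

/-- The dual family `(w₁, …, wₙ)` with `wₙ = -(w₁ + ⋯ + wₙ₋₁)`, where `n = m + 1`. -/
def completeDual {G : Type*} [AddCommGroup G] (w : Fin m → G) : Fin (m + 1) → G :=
  Fin.snoc w (-∑ i, w i)

theorem sum_completeDual {G : Type*} [AddCommGroup G] (w : Fin m → G) :
    ∑ i, completeDual w i = 0 := by
  simp [completeDual, Fin.sum_univ_castSucc]

/-- `‖g‖_γ²` for the gradient `g = (γ⁻¹ ∑ yᵢ, x₁ - xₙ, …, xₙ₋₁ - xₙ)` of the separator. -/
noncomputable def gradientNormSq (γ : ℝ) (x y : Fin (m + 1) → H) : ℝ :=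
  1 / γ * ‖∑ i, y i‖ ^ 2 + ∑ i : Fin m, ‖x i.castSucc - x (Fin.last m)‖ ^ 2

theorem normSq_sub_smul_gradient [NormedSpace ℝ H] {γ : ℝ} (hγ : γ ≠ 0)
    (x y : Fin (m + 1) → H) (z : H) (w : Fin m → H) (α : ℝ) :
    γ * ‖z - (1 / γ * α) • (∑ i, y i) - z‖ ^ 2
      + ∑ i, ‖w i - α • (x i.castSucc - x (Fin.last m)) - w i‖ ^ 2
      = α ^ 2 * gradientNormSq γ x y := by
  simp only [sub_sub_cancel_left, norm_neg, norm_smul_sq, ← Finset.mul_sum, gradientNormSq]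
  field_simp

theorem gradientNormSq_le {γ K : ℝ} (hγ : 0 < γ) {z : H} {w x y : Fin (m + 1) → H}
    (hw : ∑ i, w i = 0) (hK : ∑ i, ‖y i - w i‖ ^ 2 ≤ K * ∑ i, ‖z - x i‖ ^ 2) :
    gradientNormSq γ x y ≤ 2 * (m + 1) * (1 + K / γ) * ∑ i, ‖z - x i‖ ^ 2 := by
  set S := ∑ i, ‖z - x i‖ ^ 2
  have dual_part : ‖∑ i, y i‖ ^ 2 ≤ (m + 1) * (K * S) :=
    calc ‖∑ i, y i‖ ^ 2 = ‖∑ i, (y i - w i)‖ ^ 2 := by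
          rw [Finset.sum_sub_distrib, hw, sub_zero]
      _ ≤ (m + 1) * ∑ i, ‖y i - w i‖ ^ 2 := by
          simpa using norm_sum_sq_le_card_mul Finset.univ fun i ↦ y i - w i
      _ ≤ (m + 1) * (K * S) := by gcongr
  have primal_part : ∑ i : Fin m, ‖x i.castSucc - x (Fin.last m)‖ ^ 2 ≤ m * (2 * S) := by
    simpa using Finset.sum_le_card_nsmul Finset.univ _ (2 * S) fun (i : Fin m) _ ↦
      norm_sub_sq_le_two_mul_sum z x i.castSucc_ne_last
  have hKS : 0 ≤ K * S := le_trans (by positivity) hK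
  have : 0 ≤ S := by positivity
  calc gradientNormSq γ x y ≤ 1 / γ * ((m + 1) * (K * S)) + m * (2 * S) := by
        unfold gradientNormSq; gcongr
    _ ≤ 2 * (1 / γ * ((m + 1) * (K * S))) + (m + 1) * (2 * S) := by
        refine add_le_add (le_mul_of_one_le_left (by positivity) one_le_two) ?_
        gcongr
        exact le_add_of_nonneg_right zero_le_one
    _ = 2 * (m + 1) * (1 + K / γ) * S := by ring

variable [InnerProductSpace ℝ H]

/-- The separator function `φ` of the points `(xᵢ, yᵢ)`, evaluated at `(z, w₁, …, wₙ₋₁)`. -/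
def separator (x y : Fin (m + 1) → H) (z : H) (w : Fin m → H) : ℝ :=
  (∑ i, ⟪z - x i.castSucc, y i.castSucc - w i⟫)
    + ⟪z - x (Fin.last m), y (Fin.last m) + ∑ i, w i⟫

theorem separator_eq_sum (x y : Fin (m + 1) → H) (z : H) (w : Fin m → H) :
    separator x y z w = ∑ i, ⟪z - x i, y i - completeDual w i⟫ := by
  simp [separator, completeDual, Fin.sum_univ_castSucc]

end Separator

section Summation

variable {H ι : Type*} [SeminormedAddCommGroup H] [InnerProductSpace ℝ H] [Fintype ι]
  {z : H} {w x y : ι → H} {ξ η M K : ℝ}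

theorem sum_primal_residual_le
    (h : ∀ i, IsSeparatingPair z (w i) (x i) (y i) ξ η M K) :
    ξ * ∑ i, ‖z - x i‖ ^ 2 ≤ ∑ i, ⟪z - x i, y i - w i⟫ := by
  rw [Finset.mul_sum]
  exact Finset.sum_le_sum fun i _ ↦ (h i).primal_le

theorem sum_dual_residual_le_primal
    (h : ∀ i, IsSeparatingPair z (w i) (x i) (y i) ξ η M K) :
    ∑ i, ‖y i - w i‖ ^ 2 ≤ K * ∑ i, ‖z - x i‖ ^ 2 := by
  rw [Finset.mul_sum]
  exact Finset.sum_le_sum fun i _ ↦ (h i).dual_le_primal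

theorem sum_dual_residual_le
    (h : ∀ i, IsSeparatingPair z (w i) (x i) (y i) ξ η M K)
    (hξ : 0 < ξ) (hη : 0 < η) (hM : 0 ≤ M) :
    ∑ i, ‖y i - w i‖ ^ 2 ≤ η⁻¹ * (1 + ξ⁻¹ * M) * ∑ i, ⟪z - x i, y i - w i⟫ := by
  set φ := ∑ i, ⟪z - x i, y i - w i⟫
  have primal_le : ∑ i, ‖z - x i‖ ^ 2 ≤ ξ⁻¹ * φ :=
    (le_inv_mul_iff₀ hξ).2 (sum_primal_residual_le h)
  rw [mul_assoc, le_inv_mul_iff₀ hη]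
  calc η * ∑ i, ‖y i - w i‖ ^ 2 ≤ φ + M * ∑ i, ‖z - x i‖ ^ 2 := by
        simp only [Finset.mul_sum, φ, ← Finset.sum_add_distrib]
        exact Finset.sum_le_sum fun i _ ↦ (h i).dual_le
    _ ≤ φ + M * (ξ⁻¹ * φ) := by gcongr
    _ = (1 + ξ⁻¹ * M) * φ := by ring

end Summation

section SeparatorBounds

variable {H : Type*} [SeminormedAddCommGroup H] [InnerProductSpace ℝ H] {m : ℕ} {z : H}
  {w : Fin m → H} {x y : Fin (m + 1) → H} {ξ η M K : ℝ}

theorem separator_nonneg (hξ : 0 ≤ ξ)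
    (h : ∀ i, IsSeparatingPair z (completeDual w i) (x i) (y i) ξ η M K) :
    0 ≤ separator x y z w := by
  rw [separator_eq_sum]
  exact le_trans (by positivity) (sum_primal_residual_le h)

theorem mul_gradientNormSq_le_separator {γ : ℝ} (hγ : 0 < γ) (hξ : 0 ≤ ξ) (hK : 0 ≤ K)
    (h : ∀ i, IsSeparatingPair z (completeDual w i) (x i) (y i) ξ η M K) :
    ξ * gradientNormSq γ x y ≤ 2 * (m + 1) * (1 + K / γ) * separator x y z w :=
  calc ξ * gradientNormSq γ x y
      ≤ ξ * (2 * (m + 1) * (1 + K / γ) * ∑ i, ‖z - x i‖ ^ 2) := by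
        gcongr
        exact gradientNormSq_le hγ (sum_completeDual w) (sum_dual_residual_le_primal h)
    _ = 2 * (m + 1) * (1 + K / γ) * (ξ * ∑ i, ‖z - x i‖ ^ 2) := by ring
    _ ≤ 2 * (m + 1) * (1 + K / γ) * separator x y z w := by
        rw [separator_eq_sum]
        gcongr
        exact sum_primal_residual_le h

end SeparatorBounds

theorem le_mul_relaxed_step_sq {φ π ξ₁ ξ₂ β βlo : ℝ} (hφ : 0 ≤ φ) (hπ : 0 < π) (hξ₂ : 0 < ξ₂)
    (hβlo : 0 < βlo) (hβ : βlo ≤ β) (hπφ : ξ₂ * π ≤ ξ₁ * φ) :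
    φ ≤ ξ₁ / (βlo ^ 2 * ξ₂) * ((β * φ / π) ^ 2 * π) := by
  have step_sq : ξ₁ / (βlo ^ 2 * ξ₂) * ((β * φ / π) ^ 2 * π)
      = φ * β ^ 2 * (ξ₁ * φ) / (βlo ^ 2 * (ξ₂ * π)) := by field_simp
  rw [step_sq, le_div_iff₀ (by positivity), ← mul_assoc]
  gcongr

section Iteration

variable {H ι : Type*} [SeminormedAddCommGroup H] [InnerProductSpace ℝ H] [Fintype ι]
  [DecidableEq ι] {B F : Finset ι} {A : ι → H → H} {L : ι → ℝ} {z : H} {w x y e : ι → H}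
  {ρ ρbar : ι → ℝ} {σ δ ρlo ρhi : ℝ}

theorem isSeparatingPair_of_step [Nonempty ι] (hBF : IsCompl B F)
    (hL : ∀ i ∈ F, 0 ≤ L i) (hA : ∀ i ∈ F, ‖A i z - A i (x i)‖ ≤ L i * ‖z - x i‖)
    (hσ0 : 0 ≤ σ) (hσ1 : σ ≤ 1) (hδ : 0 ≤ δ) (hρlo : 0 < ρlo) (hρ : ∀ i, ρlo ≤ ρ i)
    (hρB : ∀ i ∈ B, ρ i ≤ ρhi) (hρF : ∀ i ∈ F, ρ i ≤ ρbar i)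
    (hback : ∀ i ∈ B, IsInexactBackwardStep z (w i) (x i) (y i) (e i) (ρ i) σ δ)
    (hforw : ∀ i ∈ F, IsTwoForwardStep (A i) z (w i) (x i) (y i) (ρ i)) (i : ι) :
    IsSeparatingPair z (w i) (x i) (y i) (separationModulus B σ ρhi ρbar L) (ρlo * (1 - σ) / 2)
      (maxLipschitz F L * (1 + ρlo * maxLipschitz F L))
      (2 * (maxLipschitz F L ^ 2 * F.card + (1 + δ) / ρlo ^ 2)) := by
  obtain rfl := hBF.compl_eq
  have hLbar := maxLipschitz_nonneg hL
  have hρi : 0 < ρ i := hρlo.trans_le (hρ i)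
  by_cases hi : i ∈ B
  · refine (hback i hi).isSeparatingPair hσ1 hδ hρlo (hρ i) ?_ (by positivity) ?_
    · have : 0 ≤ 1 - σ := sub_nonneg.2 hσ1
      refine (separationModulus_le_of_mem hi σ ρhi ρbar L).trans ?_
      gcongr
      exact hρB i hi
    · gcongr
      exact le_add_of_nonneg_left (by positivity)
  · have hiF : i ∈ Bᶜ := Finset.mem_compl.2 hi
    have hLi := hL i hiF
    have hLi_le := le_maxLipschitz L hiF
    refine (hforw i hiF).isSeparatingPair (hA i hiF) hσ0 hρlo (hρ i) ?_ (by gcongr) ?_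
    · refine (separationModulus_le_of_notMem hi σ ρhi ρbar L).trans ?_
      gcongr
      exact hρF i hiF
    · have one_le_card : (1 : ℝ) ≤ (Bᶜ).card := by
        exact_mod_cast Finset.card_pos.2 ⟨i, hiF⟩
      gcongr
      · exact (pow_le_pow_left₀ hLi hLi_le 2).trans
          (le_mul_of_one_le_right (sq_nonneg _) one_le_card)
      · exact le_add_of_nonneg_right hδ

end Iteration

theorem wy_residual_bound_one_iteration_general
    {H : Type*} [SeminormedAddCommGroup H] [InnerProductSpace ℝ H]
    {m : ℕ} {γ : ℝ} (hγ : 0 < γ) {B F : Finset (Fin (m + 1))} (hBF : IsCompl B F)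
    {A : Fin (m + 1) → H → H} {L : Fin (m + 1) → ℝ} (hL : ∀ i ∈ F, 0 ≤ L i)
    (hA : ∀ i ∈ F, ∀ u v : H, ‖A i u - A i v‖ ≤ L i * ‖u - v‖)
    {z : H} {w : Fin m → H} {x y e : Fin (m + 1) → H} {ρ ρbar : Fin (m + 1) → ℝ}
    {σ δ ρlo ρhi : ℝ} (hσ0 : 0 ≤ σ) (hσ1 : σ < 1) (hδ : 0 ≤ δ)
    (hρlo : 0 < ρlo) (hρ : ∀ i, ρlo ≤ ρ i) (hρB : ∀ i ∈ B, ρ i ≤ ρhi)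
    (hρF : ∀ i ∈ F, ρ i ≤ ρbar i ∧ ρbar i * L i < 1)
    (hback : ∀ i ∈ B, IsInexactBackwardStep z (completeDual w i) (x i) (y i) (e i) (ρ i) σ δ)
    (hforw : ∀ i ∈ F, IsTwoForwardStep (A i) z (completeDual w i) (x i) (y i) (ρ i))
    {Lbar ξ₁ ξ₂ : ℝ} (hLbar : Lbar = maxLipschitz F L)
    (hξ₁ : ξ₁ = 2 * (m + 1) * (1 + 2 / γ * (Lbar ^ 2 * F.card + (1 + δ) / ρlo ^ 2)))
    (hξ₂ : ξ₂ = separationModulus B σ ρhi ρbar L)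
    (hg : 0 < gradientNormSq γ x y) {β βlo α : ℝ} (hβlo : 0 < βlo) (hβ : βlo ≤ β)
    (hα : α = β * separator x y z w / gradientNormSq γ x y) {zplus : H} {wplus : Fin m → H}
    (hzplus : zplus = z - (1 / γ * α) • ∑ i, y i)
    (hwplus : ∀ i, wplus i = w i - α • (x i.castSucc - x (Fin.last m))) :
    ∑ i, ‖completeDual w i - y i‖ ^ 2
      ≤ 2 * (1 - σ)⁻¹ * ρlo⁻¹ * (1 + ξ₂⁻¹ * Lbar * (1 + ρlo * Lbar)) * (ξ₁ / (βlo ^ 2 * ξ₂))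
        * (γ * ‖zplus - z‖ ^ 2 + ∑ i, ‖wplus i - w i‖ ^ 2) := by
  have hσ : 0 < 1 - σ := sub_pos.2 hσ1
  have hLbar0 : 0 ≤ Lbar := hLbar ▸ maxLipschitz_nonneg hL
  have hξ₁0 : 0 ≤ ξ₁ := by rw [hξ₁]; positivity
  have hρ0 (i) : 0 < ρ i := hρlo.trans_le (hρ i)
  have hξ₂0 : 0 < ξ₂ := hξ₂ ▸ separationModulus_pos hBF hσ1
    (fun ⟨i, hi⟩ ↦ (hρ0 i).trans_le (hρB i hi))
    (fun i hi ↦ ⟨(hρ0 i).trans_le (hρF i hi).1, (hρF i hi).2⟩)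
  have separating := isSeparatingPair_of_step hBF hL (fun i hi ↦ hA i hi z (x i)) hσ0 hσ1.le hδ
    hρlo hρ hρB (fun i hi ↦ (hρF i hi).1) hback hforw
  rw [← hLbar, ← hξ₂] at separating
  have gradient_le : ξ₂ * gradientNormSq γ x y ≤ ξ₁ * separator x y z w :=
    (mul_gradientNormSq_le_separator hγ hξ₂0.le (by positivity) separating).trans_eq
      (by rw [hξ₁]; ring)
  calc ∑ i, ‖completeDual w i - y i‖ ^ 2 = ∑ i, ‖y i - completeDual w i‖ ^ 2 := by
        simp only [norm_sub_rev]
    _ ≤ (ρlo * (1 - σ) / 2)⁻¹ * (1 + ξ₂⁻¹ * (Lbar * (1 + ρlo * Lbar))) * separator x y z w :=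
        separator_eq_sum x y z w ▸ sum_dual_residual_le separating hξ₂0 (by positivity)
          (by positivity)
    _ = 2 * (1 - σ)⁻¹ * ρlo⁻¹ * (1 + ξ₂⁻¹ * Lbar * (1 + ρlo * Lbar)) * separator x y z w := by
        field_simp
    _ ≤ 2 * (1 - σ)⁻¹ * ρlo⁻¹ * (1 + ξ₂⁻¹ * Lbar * (1 + ρlo * Lbar))
          * (ξ₁ / (βlo ^ 2 * ξ₂) * (α ^ 2 * gradientNormSq γ x y)) := by
        gcongr
        exact hα ▸ le_mul_relaxed_step_sq (separator_nonneg hξ₂0.le separating) hg hξ₂0 hβlo hβ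
          gradient_le
    _ = _ := by simp only [hzplus, hwplus, normSq_sub_smul_gradient hγ.ne', mul_assoc]

/-- After the relaxed projection step `p⁺ = p − β (φ(p)/‖g‖_γ²) g` of one
iteration of projective splitting, one has `Σᵢ ‖wᵢ − yᵢ‖² ≤ E₁ ‖p⁺ − p‖_γ²`, where
`E₁ = 2(1−σ)⁻¹ρ̲⁻¹(1 + ξ₂⁻¹ L̄ (1 + ρ̲ L̄)) ξ₁/(β̲² ξ₂)`.  Here `n = m+1 ≥ 1`. -/
theorem wy_residual_bound_one_iteration
    {H : Type*} [NormedAddCommGroup H] [InnerProductSpace ℝ H] [CompleteSpace H]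
    (m : ℕ) (γ : ℝ) (hγ : 0 < γ)
    (B F : Finset (Fin (m+1))) (hBF : Disjoint B F) (hBFunion : B ∪ F = Finset.univ)
    (T : Fin (m+1) → H → Set H) (Tf : Fin (m+1) → H → H) (L : Fin (m+1) → ℝ)
    (hTmono : ∀ i ∈ B, ∀ x x' y y' : H, y ∈ T i x → y' ∈ T i x' → 0 ≤ ⟪x - x', y - y'⟫)
    (hTfmono : ∀ i ∈ F, ∀ u v : H, 0 ≤ ⟪u - v, Tf i u - Tf i v⟫)
    (hL0 : ∀ i ∈ F, 0 ≤ L i)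
    (hLip : ∀ i ∈ F, ∀ u v : H, ‖Tf i u - Tf i v‖ ≤ L i * ‖u - v‖)
    (z : H) (w : Fin m → H) (wfull : Fin (m+1) → H)
    (hwfull : wfull = Fin.snoc w (-(∑ i : Fin m, w i)))
    (x y : Fin (m+1) → H) (ρ : Fin (m+1) → ℝ) (e : Fin (m+1) → H)
    (σ δ : ℝ) (hσ0 : 0 ≤ σ) (hσ1 : σ < 1) (hδ : 0 ≤ δ)
    (ρlo ρhi : ℝ) (ρbar : Fin (m+1) → ℝ)
    (hρlo : 0 < ρlo) (hρge : ∀ i, ρlo ≤ ρ i)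
    (hρB : ∀ i ∈ B, ρ i ≤ ρhi)
    (hρF : ∀ i ∈ F, ρ i ≤ ρbar i ∧ ρbar i * L i < 1)
    (hback : ∀ i ∈ B, y i ∈ T i (x i) ∧ x i + ρ i • y i = z + ρ i • wfull i + e i)
    (hforw : ∀ i ∈ F, x i = z - ρ i • (Tf i z - wfull i) ∧ y i = Tf i (x i))
    (herr1 : ∀ i ∈ B, -(σ * ‖z - x i‖ ^ 2) ≤ ⟪z - x i, e i⟫)
    (herr2 : ∀ i ∈ B, ⟪e i, y i - wfull i⟫ ≤ ρ i * σ * ‖y i - wfull i‖ ^ 2)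
    (herr3 : ∀ i ∈ B, ‖e i‖ ^ 2 ≤ δ * ‖z - x i‖ ^ 2)
    (φval : ℝ)
    (hφval : φval = (∑ i : Fin m, ⟪z - x i.castSucc, y i.castSucc - w i⟫)
      + ⟪z - x (Fin.last m), y (Fin.last m) + ∑ i : Fin m, w i⟫)
    (Lbar : ℝ)
    (hLbar : Lbar = Finset.univ.sup' Finset.univ_nonempty (fun i => if i ∈ F then L i else 0))
    (ξ₁ : ℝ)
    (hξ₁ : ξ₁ = 2 * (m+1 : ℝ) *
      (1 + 2 / γ * (Lbar ^ 2 * (F.card : ℝ) + (1 + δ) / ρlo ^ 2)))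
    (ξ₂ : ℝ)
    (hξ₂ : ξ₂ = Finset.univ.inf' Finset.univ_nonempty
      (fun i => if i ∈ B then (1 - σ) / ρhi else 1 / ρbar i - L i))
    (π : ℝ)
    (hπdef : π = (1 / γ) * ‖∑ i : Fin (m+1), y i‖ ^ 2
      + ∑ i : Fin m, ‖x i.castSucc - x (Fin.last m)‖ ^ 2)
    (hπpos : 0 < π)
    (β βlo βhi : ℝ) (hβlo : 0 < βlo) (hβ1 : βlo ≤ β) (hβ2 : β ≤ βhi) (hβhi : βhi < 2)
    (α : ℝ) (hα : α = β * φval / π)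
    (zplus : H) (wplus : Fin m → H)
    (hzplus : zplus = z - ((1 / γ) * α) • (∑ i : Fin (m+1), y i))
    (hwplus : ∀ i : Fin m, wplus i = w i - α • (x i.castSucc - x (Fin.last m)))
    (E₁ : ℝ)
    (hE₁ : E₁ = 2 * (1 - σ)⁻¹ * ρlo⁻¹ * (1 + ξ₂⁻¹ * Lbar * (1 + ρlo * Lbar)) *
      (ξ₁ / (βlo ^ 2 * ξ₂))) :
    ∑ i : Fin (m+1), ‖wfull i - y i‖ ^ 2
      ≤ E₁ * (γ * ‖zplus - z‖ ^ 2 + ∑ i : Fin m, ‖wplus i - w i‖ ^ 2) := by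
  subst hwfull hφval hLbar hξ₁ hξ₂ hπdef hE₁
  exact wy_residual_bound_one_iteration_general hγ ⟨hBF, codisjoint_iff.2 hBFunion⟩ hL0 hLip hσ0
    hσ1 hδ hρlo hρge hρB hρF (fun i hi ↦ ⟨(hback i hi).2, herr1 i hi, herr2 i hi, herr3 i hi⟩)
    (fun i hi ↦ ⟨(hforw i hi).1, (hforw i hi).2⟩) rfl rfl rfl hπpos hβlo hβ1 hα hzplus hwplus
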